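/- For any λ ∈ ℝ and any X ∈ M_{λ,1}, the stabilizer {A ∈ G : A X = X} of X in G is isomorphic as a group to {B ∈ GL(n,ℝ) : η(Bu,Bv) = η(u,v) for all u,v ∈ ℝ^n, det B = 1}, i.e. to SO(1,n−1). (This realizes each Minkowski slice of the flat model as the homogeneous space ISO(1,n−1)/SO(1,n−1).) -/

import Mathlib

def formSig (k m : ℕ) (x y : Fin m → ℝ) : ℝ :=
  ∑ i : Fin m, (if (i : ℕ) < k then -(x i * y i) else x i * y i)

/-- The group of linear automorphisms of `ℝ^m` with determinant `1` preserving the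
bilinear form `formSig k m` (of signature `(k, m-k)`), realized as a subgroup of the
group of invertible `m × m` real matrices. -/
def specialIsometry (k m : ℕ) : Subgroup (Matrix (Fin m) (Fin m) ℝ)ˣ where
  carrier := {A | ((A : Matrix (Fin m) (Fin m) ℝ)).det = 1 ∧
    ∀ x y : Fin m → ℝ,
      formSig k m ((A : Matrix (Fin m) (Fin m) ℝ).mulVec x)
        ((A : Matrix (Fin m) (Fin m) ℝ).mulVec y) = formSig k m x y}
  one_mem' := by
    refine ⟨by simp, fun x y => by simp⟩
  mul_mem' := by
    intro a b ha hb
    obtain ⟨had, haf⟩ := ha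
    obtain ⟨hbd, hbf⟩ := hb
    refine ⟨by rw [Units.val_mul, Matrix.det_mul, had, hbd, mul_one], fun x y => ?_⟩
    rw [Units.val_mul, ← Matrix.mulVec_mulVec, ← Matrix.mulVec_mulVec, haf, hbf]
  inv_mem' := by
    intro a ha
    obtain ⟨had, haf⟩ := ha
    have hinv : (↑a⁻¹ : Matrix (Fin m) (Fin m) ℝ) * (↑a : Matrix (Fin m) (Fin m) ℝ) = 1 := a.inv_mul
    refine ⟨?_, fun x y => ?_⟩
    · have h := congrArg Matrix.det hinv
      rw [Matrix.det_mul, had, mul_one, Matrix.det_one] at h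
      exact h
    · have hx : ∀ v : Fin m → ℝ,
          (↑a : Matrix (Fin m) (Fin m) ℝ).mulVec
            ((↑a⁻¹ : Matrix (Fin m) (Fin m) ℝ).mulVec v) = v := by
        intro v
        rw [Matrix.mulVec_mulVec, a.mul_inv, Matrix.one_mulVec]
      calc formSig k m ((↑a⁻¹ : Matrix (Fin m) (Fin m) ℝ).mulVec x)
              ((↑a⁻¹ : Matrix (Fin m) (Fin m) ℝ).mulVec y)
          = formSig k m
              ((↑a : Matrix (Fin m) (Fin m) ℝ).mulVec
                ((↑a⁻¹ : Matrix (Fin m) (Fin m) ℝ).mulVec x))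
              ((↑a : Matrix (Fin m) (Fin m) ℝ).mulVec
                ((↑a⁻¹ : Matrix (Fin m) (Fin m) ℝ).mulVec y)) := (haf _ _).symm
        _ = formSig k m x y := by rw [hx, hx]

/-- The subgroup of invertible `m × m` real matrices fixing a given vector `v`. -/
def vecStab (m : ℕ) (v : Fin m → ℝ) : Subgroup (Matrix (Fin m) (Fin m) ℝ)ˣ where
  carrier := {A | (A : Matrix (Fin m) (Fin m) ℝ).mulVec v = v}
  one_mem' := by simp
  mul_mem' := by
    intro a b ha hb
    show ((a * b : (Matrix (Fin m) (Fin m) ℝ)ˣ) : Matrix (Fin m) (Fin m) ℝ).mulVec v = v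
    rw [Units.val_mul, ← Matrix.mulVec_mulVec, hb, ha]
  inv_mem' := by
    intro a ha
    show ((a⁻¹ : (Matrix (Fin m) (Fin m) ℝ)ˣ) : Matrix (Fin m) (Fin m) ℝ).mulVec v = v
    conv_lhs => rw [← ha]
    rw [Matrix.mulVec_mulVec, a.inv_mul, Matrix.one_mulVec]

/-- The 'Poincaré subgroup' of `SL(n+2,ℝ)` determined by the signature `(2,n)` form
`formSig 2 (n+2)` and the null vector `I`. -/
def poincareGroup (n : ℕ) (I : Fin (n + 2) → ℝ) :
    Subgroup (Matrix (Fin (n + 2)) (Fin (n + 2)) ℝ)ˣ :=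
  specialIsometry 2 (n + 2) ⊓ vecStab (n + 2) I

/-- The set `M_{λ,s} = {X : Φ(X,X) = λ, Φ(I,X) = s, X ∉ ℝ·I}`. -/
def Mset (n : ℕ) (I : Fin (n + 2) → ℝ) (lam s : ℝ) : Set (Fin (n + 2) → ℝ) :=
  {X | formSig 2 (n + 2) X X = lam ∧ formSig 2 (n + 2) I X = s ∧ ¬ ∃ c : ℝ, X = c • I}

theorem fs_comm (k m : ℕ) (x y : Fin m → ℝ) : formSig k m x y = formSig k m y x := by
  unfold formSig
  refine Finset.sum_congr rfl fun i _ => ?_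
  rw [mul_comm]

theorem fs_add_left (k m : ℕ) (x x' y : Fin m → ℝ) :
    formSig k m (x + x') y = formSig k m x y + formSig k m x' y := by
  unfold formSig
  rw [← Finset.sum_add_distrib]
  refine Finset.sum_congr rfl fun i _ => ?_
  simp only [Pi.add_apply]
  split_ifs <;> ring

theorem fs_smul_left (k m : ℕ) (c : ℝ) (x y : Fin m → ℝ) :
    formSig k m (c • x) y = c * formSig k m x y := by
  unfold formSig
  rw [Finset.mul_sum]
  refine Finset.sum_congr rfl fun i _ => ?_
  simp only [Pi.smul_apply, smul_eq_mul]
  split_ifs <;> ring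

theorem fs_add_right (k m : ℕ) (x y y' : Fin m → ℝ) :
    formSig k m x (y + y') = formSig k m x y + formSig k m x y' := by
  rw [fs_comm, fs_add_left, fs_comm k m y, fs_comm k m y']

theorem fs_smul_right (k m : ℕ) (c : ℝ) (x y : Fin m → ℝ) :
    formSig k m x (c • y) = c * formSig k m x y := by
  rw [fs_comm, fs_smul_left, fs_comm]

theorem fs_sub_left (k m : ℕ) (x x' y : Fin m → ℝ) :
    formSig k m (x - x') y = formSig k m x y - formSig k m x' y := by
  have : x - x' = x + (-1 : ℝ) • x' := by simp [sub_eq_add_neg]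
  rw [this, fs_add_left, fs_smul_left]; ring

theorem fs_sub_right (k m : ℕ) (x y y' : Fin m → ℝ) :
    formSig k m x (y - y') = formSig k m x y - formSig k m x y' := by
  rw [fs_comm, fs_sub_left, fs_comm k m y, fs_comm k m y']

/-- Reflection in a non-null vector. -/
theorem fs_reflection (k m : ℕ) (r : Fin m → ℝ) (hr : formSig k m r r ≠ 0) :
    ∃ P : (Matrix (Fin m) (Fin m) ℝ)ˣ,
      ∀ x, (P : Matrix (Fin m) (Fin m) ℝ).mulVec x
        = x - (2 * formSig k m x r / formSig k m r r) • r := by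
  let R : (Fin m → ℝ) →ₗ[ℝ] (Fin m → ℝ) :=
    { toFun := fun x => x - (2 * formSig k m x r / formSig k m r r) • r
      map_add' := by
        intro x y
        rw [fs_add_left]
        ext i
        simp only [Pi.sub_apply, Pi.add_apply, Pi.smul_apply, smul_eq_mul]
        ring
      map_smul' := by
        intro c x
        rw [fs_smul_left]
        ext i
        simp only [Pi.sub_apply, Pi.smul_apply, smul_eq_mul, RingHom.id_apply]
        ring }
  have hR : ∀ x, R x = x - (2 * formSig k m x r / formSig k m r r) • r := fun x => rfl
  have hRR : R ∘ₗ R = LinearMap.id := by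
    apply LinearMap.ext
    intro x
    rw [LinearMap.comp_apply, hR (R x), hR x, fs_sub_left, fs_smul_left]
    ext i
    simp only [Pi.sub_apply, Pi.smul_apply, smul_eq_mul, LinearMap.id_apply]
    field_simp
    ring
  have hM : LinearMap.toMatrix' R * LinearMap.toMatrix' R = 1 := by
    rw [← LinearMap.toMatrix'_comp, hRR, LinearMap.toMatrix'_id]
  refine ⟨⟨LinearMap.toMatrix' R, LinearMap.toMatrix' R, hM, hM⟩, fun x => ?_⟩
  rw [← hR, ← Matrix.toLin'_apply]
  simp

theorem fs_witt (k m : ℕ) (u v : Fin m → ℝ) (huv : formSig k m u u = formSig k m v v)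
    (hu : formSig k m u u ≠ 0) :
    ∃ P : (Matrix (Fin m) (Fin m) ℝ)ˣ,
      (∀ x y, formSig k m ((P : Matrix (Fin m) (Fin m) ℝ).mulVec x)
        ((P : Matrix (Fin m) (Fin m) ℝ).mulVec y) = formSig k m x y) ∧
      (∃ ε : ℝ, ε ≠ 0 ∧ (P : Matrix (Fin m) (Fin m) ℝ).mulVec u = ε • v) ∧
      (∀ w, formSig k m w u = 0 → formSig k m w v = 0 →
        (P : Matrix (Fin m) (Fin m) ℝ).mulVec w = w) := by
  have key : ∃ ε : ℝ, ε * ε = 1 ∧ formSig k m (u - ε • v) (u - ε • v) ≠ 0 := by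
    by_contra! h
    have h1 := h 1 (by norm_num)
    have h2 := h (-1) (by norm_num)
    simp only [fs_sub_left, fs_sub_right, fs_smul_left, fs_smul_right] at h1 h2
    apply hu
    linarith
  obtain ⟨ε, hε, hr⟩ := key
  obtain ⟨P, hP⟩ := fs_reflection k m _ hr
  refine ⟨P, fun x y => ?_, ⟨ε, ?_, ?_⟩, fun w h1 h2 => ?_⟩
  · rw [hP, hP]
    generalize u - ε • v = r at hr
    simp only [fs_sub_left, fs_sub_right, fs_smul_left, fs_smul_right]
    rw [fs_comm k m r y]
    field_simp
    ring
  · rintro rfl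
    norm_num at hε
  · have : formSig k m (u - ε • v) (u - ε • v) = 2 * formSig k m u (u - ε • v) := by
      simp only [fs_sub_left, fs_sub_right, fs_smul_left, fs_smul_right]
      rw [fs_comm k m v u]
      linear_combination (ε * ε) * (-huv) + (formSig k m u u) * hε
    rw [hP, ← this, div_self hr]
    simp
  · rw [hP, fs_sub_right, fs_smul_right, h1, h2]
    simp

def ixFun (n : ℕ) : Fin n ⊕ Fin 2 → Fin (n + 2) :=
  Sum.elim (fun i => i.succ.castSucc) (fun j => if j = 0 then 0 else Fin.last (n + 1))

theorem ixFun_bij (n : ℕ) : Function.Bijective (ixFun n) := by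
  rw [Fintype.bijective_iff_injective_and_card]
  refine ⟨?_, by simp⟩
  rintro (i | i) (j | j) h
  · simpa [ixFun] using h
  · exfalso
    have := congrArg Fin.val h
    have := i.2
    fin_cases j <;> simp [ixFun] at * <;> omega
  · exfalso
    have := congrArg Fin.val h
    have := j.2
    fin_cases i <;> simp [ixFun] at * <;> omega
  · have := congrArg Fin.val h
    fin_cases i <;> fin_cases j <;> simp [ixFun] at *

noncomputable def ixE (n : ℕ) : Fin n ⊕ Fin 2 ≃ Fin (n + 2) := Equiv.ofBijective _ (ixFun_bij n)

theorem fs_split (n : ℕ) (hn : 2 ≤ n) (z z' : Fin n ⊕ Fin 2 → ℝ) :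
    formSig 2 (n + 2) (z ∘ (ixE n).symm) (z' ∘ (ixE n).symm)
      = formSig 1 n (z ∘ Sum.inl) (z' ∘ Sum.inl)
        - z (Sum.inr 0) * z' (Sum.inr 0) + z (Sum.inr 1) * z' (Sum.inr 1) := by
  unfold formSig
  rw [← (ixE n).sum_comp, Fintype.sum_sum_type, Fin.sum_univ_two]
  simp only [Function.comp_apply, Equiv.symm_apply_apply]
  have h0 : ((ixE n (Sum.inr 0) : Fin (n+2)) : ℕ) = 0 := by simp [ixE, ixFun]
  have h1 : ((ixE n (Sum.inr 1) : Fin (n+2)) : ℕ) = n + 1 := by simp [ixE, ixFun]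
  have hl : ∀ i, ((ixE n (Sum.inl i) : Fin (n+2)) : ℕ) = i + 1 := by
    intro i; simp [ixE, ixFun]
  simp only [h0, h1, hl]
  · rw [if_pos (by norm_num), if_neg (by omega)]
    have hs : ∀ i : Fin n, ((i : ℕ) + 1 < 2) ↔ ((i : ℕ) < 1) := fun i => by omega
    simp only [hs]
    ring

noncomputable def blk (n : ℕ) :
    Matrix (Fin n) (Fin n) ℝ →* Matrix (Fin (n + 2)) (Fin (n + 2)) ℝ where
  toFun B := (Matrix.fromBlocks B 0 0 1).submatrix (ixE n).symm (ixE n).symm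
  map_one' := by simp
  map_mul' B C := by
    rw [Matrix.submatrix_mul_equiv, Matrix.fromBlocks_multiply]
    simp

theorem blk_apply (n : ℕ) (B : Matrix (Fin n) (Fin n) ℝ) :
    blk n B = (Matrix.fromBlocks B 0 0 1).submatrix (ixE n).symm (ixE n).symm := rfl

theorem blk_mulVec (n : ℕ) (B : Matrix (Fin n) (Fin n) ℝ) (a : Fin n → ℝ) (b : Fin 2 → ℝ) :
    (blk n B).mulVec (Sum.elim a b ∘ (ixE n).symm) = Sum.elim (B.mulVec a) b ∘ (ixE n).symm := by
  rw [blk_apply, Matrix.submatrix_mulVec_equiv]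
  congr 1
  rw [Function.comp_assoc]
  simp [Matrix.fromBlocks_mulVec]

theorem blk_det (n : ℕ) (B : Matrix (Fin n) (Fin n) ℝ) : (blk n B).det = B.det := by
  rw [blk_apply, Matrix.det_submatrix_equiv_self]
  simp

theorem blk_inj (n : ℕ) : Function.Injective (blk n) := by
  intro B C h
  ext i j
  have := congrFun (congrFun h (ixE n (Sum.inl i))) (ixE n (Sum.inl j))
  simpa [blk_apply] using this

/-- the two fixed unit vectors -/
noncomputable def fx (n : ℕ) (j : Fin 2) : Fin (n + 2) → ℝ :=
  Sum.elim 0 (Pi.single j 1) ∘ (ixE n).symm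

theorem exists_elim (n : ℕ) (x : Fin (n + 2) → ℝ) :
    ∃ a b, x = Sum.elim a b ∘ (ixE n).symm := by
  refine ⟨x ∘ ixE n ∘ Sum.inl, x ∘ ixE n ∘ Sum.inr, ?_⟩
  ext i
  obtain ⟨i, rfl⟩ := (ixE n).surjective i
  rcases i with i | i <;> simp

theorem fs_zero_left (k m : ℕ) (y : Fin m → ℝ) : formSig k m 0 y = 0 := by
  simp [formSig]

theorem fs_fx0 (n : ℕ) (hn : 2 ≤ n) (z : Fin (n + 2) → ℝ) :
    formSig 2 (n + 2) (fx n 0) z = - z (ixE n (Sum.inr 0)) := by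
  obtain ⟨a, b, rfl⟩ := exists_elim n z
  rw [fx, fs_split n hn, Sum.elim_comp_inl, fs_zero_left]
  simp

theorem fs_fx1 (n : ℕ) (hn : 2 ≤ n) (z : Fin (n + 2) → ℝ) :
    formSig 2 (n + 2) (fx n 1) z = z (ixE n (Sum.inr 1)) := by
  obtain ⟨a, b, rfl⟩ := exists_elim n z
  rw [fx, fs_split n hn, Sum.elim_comp_inl, fs_zero_left]
  simp

theorem blk_mem (n : ℕ) (hn : 2 ≤ n) (B : Matrix (Fin n) (Fin n) ℝ)
    (hB : ∀ x y, formSig 1 n (B.mulVec x) (B.mulVec y) = formSig 1 n x y) (x y) :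
    formSig 2 (n + 2) ((blk n B).mulVec x) ((blk n B).mulVec y) = formSig 2 (n + 2) x y := by
  obtain ⟨a, b, rfl⟩ := exists_elim n x
  obtain ⟨a', b', rfl⟩ := exists_elim n y
  rw [blk_mulVec, blk_mulVec, fs_split n hn, fs_split n hn]
  simp [hB]

theorem blk_fix (n : ℕ) (B : Matrix (Fin n) (Fin n) ℝ) (j : Fin 2) :
    (blk n B).mulVec (fx n j) = fx n j := by
  rw [fx, blk_mulVec]
  simp

theorem blk_surj (n : ℕ) (hn : 2 ≤ n) (C : Matrix (Fin (n + 2)) (Fin (n + 2)) ℝ)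
    (hC : ∀ x y, formSig 2 (n + 2) (C.mulVec x) (C.mulVec y) = formSig 2 (n + 2) x y)
    (hf : ∀ j, C.mulVec (fx n j) = fx n j) :
    ∃ B : Matrix (Fin n) (Fin n) ℝ, blk n B = C ∧
      ∀ x y, formSig 1 n (B.mulVec x) (B.mulVec y) = formSig 1 n x y := by
  have hcol : ∀ j, fx n j = Pi.single (ixE n (Sum.inr j)) 1 := by
    intro j
    ext i
    obtain ⟨i, rfl⟩ := (ixE n).surjective i
    rcases i with i | i
    · simp [fx, Pi.single_apply]
    · simp [fx, Pi.single_apply]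
  have hC2 : ∀ i j, C i (ixE n (Sum.inr j)) = (fx n j) i := by
    intro i j
    rw [← hf j]
    conv_rhs => rw [hcol j]
    simp
  have hr : ∀ j z, (C.mulVec z) (ixE n (Sum.inr j)) = z (ixE n (Sum.inr j)) := by
    intro j z
    have h := hC (fx n j) z
    rw [hf j] at h
    fin_cases j
    · simp only [Fin.zero_eta, fs_fx0 n hn] at h
      simpa using h
    · simp only [Fin.mk_one, fs_fx1 n hn] at h
      simpa using h
  have hb : blk n (C.submatrix (fun i => ixE n (Sum.inl i)) (fun j => ixE n (Sum.inl j))) = C := by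
    ext i j
    obtain ⟨i, rfl⟩ := (ixE n).surjective i
    obtain ⟨j, rfl⟩ := (ixE n).surjective j
    rcases j with j | j
    · rcases i with i | i
      · simp [blk_apply]
      · have := hr i (Pi.single (ixE n (Sum.inl j)) 1)
        simp only [Matrix.mulVec_single_one, Matrix.col_apply] at this
        rw [this]
        simp [blk_apply, Pi.single_apply]
    · rw [hC2]
      rcases i with i | i
      · simp [blk_apply, fx]
      · simp [blk_apply, fx, Matrix.one_apply, Pi.single_apply]
  refine ⟨_, hb, fun x y => ?_⟩
  have h := hC (Sum.elim x 0 ∘ (ixE n).symm) (Sum.elim y 0 ∘ (ixE n).symm)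
  rw [← hb, blk_mulVec, blk_mulVec, fs_split n hn, fs_split n hn] at h
  simpa using h

theorem fs_fx00 (n : ℕ) (hn : 2 ≤ n) : formSig 2 (n + 2) (fx n 0) (fx n 0) = -1 := by
  rw [fs_fx0 n hn]; simp [fx]

theorem fs_fx11 (n : ℕ) (hn : 2 ≤ n) : formSig 2 (n + 2) (fx n 1) (fx n 1) = 1 := by
  rw [fs_fx1 n hn]; simp [fx]

theorem fs_fx01 (n : ℕ) (hn : 2 ≤ n) : formSig 2 (n + 2) (fx n 0) (fx n 1) = 0 := by
  rw [fs_fx0 n hn]; simp [fx]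

/-- An isometry carrying the plane spanned by `I, X` to the standard plane. -/
theorem exists_P (n : ℕ) (hn : 2 ≤ n) (f g : Fin (n + 2) → ℝ)
    (hff : formSig 2 (n + 2) f f = -1) (hgg : formSig 2 (n + 2) g g = 1)
    (hfg : formSig 2 (n + 2) f g = 0) :
    ∃ P : (Matrix (Fin (n + 2)) (Fin (n + 2)) ℝ)ˣ,
      (∀ x y, formSig 2 (n + 2) ((P : Matrix _ _ ℝ).mulVec x)
        ((P : Matrix _ _ ℝ).mulVec y) = formSig 2 (n + 2) x y) ∧
      (∃ ε : ℝ, ε ≠ 0 ∧ (P : Matrix _ _ ℝ).mulVec f = ε • fx n 0) ∧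
      (∃ ε : ℝ, ε ≠ 0 ∧ (P : Matrix _ _ ℝ).mulVec g = ε • fx n 1) := by
  obtain ⟨P, hP, ⟨ε, hε, hPf⟩, -⟩ := fs_witt 2 (n + 2) f (fx n 0)
    (by rw [hff, fs_fx00 n hn]) (by rw [hff]; norm_num)
  obtain ⟨Q, hQ, ⟨δ, hδ, hQg⟩, hQw⟩ := fs_witt 2 (n + 2) ((P : Matrix _ _ ℝ).mulVec g) (fx n 1)
    (by rw [hP, hgg, fs_fx11 n hn]) (by rw [hP, hgg]; norm_num)
  refine ⟨Q * P, fun x y => ?_, ⟨ε, hε, ?_⟩, ⟨δ, hδ, ?_⟩⟩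
  · rw [Units.val_mul, ← Matrix.mulVec_mulVec, ← Matrix.mulVec_mulVec, hQ, hP]
  · rw [Units.val_mul, ← Matrix.mulVec_mulVec, hPf, Matrix.mulVec_smul]
    rw [hQw _ _ (fs_fx01 n hn)]
    have := hP f g
    rw [hPf, fs_smul_left, hfg] at this
    exact (mul_eq_zero.mp this).resolve_left hε
  · rw [Units.val_mul, ← Matrix.mulVec_mulVec, hQg]

theorem fix_smul_iff {m : ℕ} (A : Matrix (Fin m) (Fin m) ℝ) (c : ℝ) (hc : c ≠ 0)
    (v : Fin m → ℝ) : A.mulVec (c • v) = c • v ↔ A.mulVec v = v := by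
  rw [Matrix.mulVec_smul]
  exact ⟨fun h => smul_right_injective _ hc h, fun h => by rw [h]⟩

theorem conj_fix_iff {m : ℕ} (A P : (Matrix (Fin m) (Fin m) ℝ)ˣ) (v : Fin m → ℝ) :
    ((P * A * P⁻¹ : (Matrix (Fin m) (Fin m) ℝ)ˣ) : Matrix (Fin m) (Fin m) ℝ).mulVec
        ((P : Matrix (Fin m) (Fin m) ℝ).mulVec v) = (P : Matrix (Fin m) (Fin m) ℝ).mulVec v ↔
      (A : Matrix (Fin m) (Fin m) ℝ).mulVec v = v := by
  rw [Matrix.mulVec_mulVec, ← Units.val_mul, inv_mul_cancel_right, Units.val_mul,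
    ← Matrix.mulVec_mulVec]
  constructor
  · intro h
    have := congrArg ((P⁻¹ : (Matrix (Fin m) (Fin m) ℝ)ˣ) : Matrix (Fin m) (Fin m) ℝ).mulVec h
    simpa [Matrix.mulVec_mulVec] using this
  · intro h; rw [h]

theorem isom_inv {k m : ℕ} (P : (Matrix (Fin m) (Fin m) ℝ)ˣ)
    (hP : ∀ x y, formSig k m ((P : Matrix _ _ ℝ).mulVec x)
        ((P : Matrix _ _ ℝ).mulVec y) = formSig k m x y) (x y) :
    formSig k m (((P⁻¹ : (Matrix (Fin m) (Fin m) ℝ)ˣ) : Matrix _ _ ℝ).mulVec x)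
        (((P⁻¹ : (Matrix (Fin m) (Fin m) ℝ)ˣ) : Matrix _ _ ℝ).mulVec y) = formSig k m x y := by
  rw [← hP]
  simp [Matrix.mulVec_mulVec]

theorem conj_mem_iff {k m : ℕ} (A P : (Matrix (Fin m) (Fin m) ℝ)ˣ)
    (hP : ∀ x y, formSig k m ((P : Matrix _ _ ℝ).mulVec x)
        ((P : Matrix _ _ ℝ).mulVec y) = formSig k m x y) :
    P * A * P⁻¹ ∈ specialIsometry k m ↔ A ∈ specialIsometry k m := by
  have key : ∀ (A P : (Matrix (Fin m) (Fin m) ℝ)ˣ),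
      (∀ x y, formSig k m ((P : Matrix _ _ ℝ).mulVec x)
        ((P : Matrix _ _ ℝ).mulVec y) = formSig k m x y) →
      A ∈ specialIsometry k m → P * A * P⁻¹ ∈ specialIsometry k m := by
    rintro A P hP ⟨h1, h2⟩
    refine ⟨?_, fun x y => ?_⟩
    · rw [Units.val_mul, Units.val_mul, Matrix.det_mul, Matrix.det_mul, mul_right_comm,
        ← Matrix.det_mul, ← Units.val_mul, mul_inv_cancel, h1]
      simp
    · simp only [Units.val_mul, ← Matrix.mulVec_mulVec]
      rw [hP, h2, isom_inv P hP]
  refine ⟨fun h => ?_, key A P hP⟩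
  have := key _ P⁻¹ (isom_inv P hP) h
  have e : P⁻¹ * (P * A * P⁻¹) * P⁻¹⁻¹ = A := by group
  rwa [e] at this

/-- For any `λ ∈ ℝ` and any `X ∈ M_{λ,1}`, the stabilizer of `X` in the Poincaré
subgroup `G` is isomorphic, as a group, to the special Lorentz group
`SO(1,n-1) = {B : η(Bu,Bv) = η(u,v), det B = 1}` (where `η = formSig 1 n` is the
standard Minkowski form of signature `(1,n-1)` on `ℝ^n`). -/
theorem stabilizer_of_minkowski_point_iso_SO
    (n : ℕ) (hn : 2 ≤ n) (I : Fin (n + 2) → ℝ) (hI : I ≠ 0)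
    (hII : formSig 2 (n + 2) I I = 0) (lam : ℝ)
    (X : Fin (n + 2) → ℝ) (hX : X ∈ Mset n I lam 1) :
    Nonempty ((↥(poincareGroup n I ⊓ vecStab (n + 2) X)) ≃* ↥(specialIsometry 1 n)) := by
  obtain ⟨hXX, hIX, -⟩ := hX
  -- an orthonormal basis of the plane spanned by I and X
  let f : Fin (n + 2) → ℝ := X - ((lam + 1) / 2) • I
  let g : Fin (n + 2) → ℝ := X - ((lam - 1) / 2) • I
  have hXI : formSig 2 (n + 2) X I = 1 := by rw [fs_comm, hIX]
  obtain ⟨P, hP, ⟨ε, hε, hPf⟩, ⟨δ, hδ, hPg⟩⟩ := exists_P n hn f g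
    (by simp only [f, fs_sub_left, fs_sub_right, fs_smul_left, fs_smul_right, hXX, hIX, hXI, hII]
        ring)
    (by simp only [g, fs_sub_left, fs_sub_right, fs_smul_left, fs_smul_right, hXX, hIX, hXI, hII]
        ring)
    (by simp only [f, g, fs_sub_left, fs_sub_right, fs_smul_left, fs_smul_right, hXX, hIX, hXI,
          hII]
        ring)
  have hIXfg : ∀ A : Matrix (Fin (n + 2)) (Fin (n + 2)) ℝ,
      (A.mulVec I = I ∧ A.mulVec X = X) ↔ (A.mulVec f = f ∧ A.mulVec g = g) := by
    intro A
    constructor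
    · rintro ⟨h1, h2⟩
      simp [f, g, Matrix.mulVec_sub, Matrix.mulVec_smul, h1, h2]
    · rintro ⟨h1, h2⟩
      have eI : I = g - f := by
        ext i; simp [f, g]; ring
      have hI' : A.mulVec I = I := by rw [eI, Matrix.mulVec_sub, h1, h2]
      have eX : X = f + ((lam + 1) / 2) • I := by simp [f]
      refine ⟨hI', ?_⟩
      conv_lhs => rw [eX]
      rw [Matrix.mulVec_add, h1, Matrix.mulVec_smul, hI', ← eX]
  have hmem : ∀ A : (Matrix (Fin (n + 2)) (Fin (n + 2)) ℝ)ˣ,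
      A ∈ poincareGroup n I ⊓ vecStab (n + 2) X ↔
        (P * A * P⁻¹ ∈ specialIsometry 2 (n + 2) ∧
          ∀ j, ((P * A * P⁻¹ : (Matrix (Fin (n + 2)) (Fin (n + 2)) ℝ)ˣ) :
            Matrix _ _ ℝ).mulVec (fx n j) = fx n j) := by
    intro A
    have e1 : A ∈ poincareGroup n I ⊓ vecStab (n + 2) X ↔ (A ∈ specialIsometry 2 (n + 2) ∧
        ((A : Matrix _ _ ℝ).mulVec I = I ∧ (A : Matrix _ _ ℝ).mulVec X = X)) := by
      rw [← and_assoc]; rfl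
    rw [e1, hIXfg, conj_mem_iff A P hP, Fin.forall_fin_two, ← fix_smul_iff _ ε hε (fx n 0),
      ← fix_smul_iff _ δ hδ (fx n 1), ← hPf, ← hPg, conj_fix_iff, conj_fix_iff]
  let φ : ↥(specialIsometry 1 n) →* (Matrix (Fin (n + 2)) (Fin (n + 2)) ℝ)ˣ :=
    ((MulAut.conj P⁻¹).toMonoidHom.comp (Units.map (blk n))).comp (specialIsometry 1 n).subtype
  have hφ : ∀ B, φ B = P⁻¹ * Units.map (blk n) B.1 * P := by
    intro B; simp [φ]
  have hφ' : ∀ B, P * φ B * P⁻¹ = Units.map (blk n) B.1 := by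
    intro B; rw [hφ]; group
  have hinj : Function.Injective φ := by
    intro B C h
    have h2 : Units.map (blk n) B.1 = Units.map (blk n) C.1 := by rw [← hφ', ← hφ', h]
    have h3 := congrArg Units.val h2
    exact Subtype.ext (Units.ext (blk_inj n h3))
  have hrange : φ.range = poincareGroup n I ⊓ vecStab (n + 2) X := by
    ext A
    rw [hmem, MonoidHom.mem_range]
    constructor
    · rintro ⟨B, rfl⟩
      rw [hφ']
      obtain ⟨B, hB1, hB2⟩ := B
      refine ⟨⟨?_, ?_⟩, ?_⟩
      · simpa [blk_det] using hB1
      · exact blk_mem n hn _ hB2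
      · exact blk_fix n _
    · rintro ⟨⟨h1, h2⟩, h3⟩
      obtain ⟨B, hB, hB'⟩ := blk_surj n hn _ h2 h3
      have hd : B.det = 1 := by rw [← blk_det, hB, h1]
      let U : (Matrix (Fin n) (Fin n) ℝ)ˣ := Matrix.nonsingInvUnit B (by rw [hd]; exact isUnit_one)
      refine ⟨⟨U, hd, hB'⟩, ?_⟩
      rw [hφ]
      have : Units.map (blk n) U = P * A * P⁻¹ := Units.ext hB
      show P⁻¹ * Units.map (blk n) U * P = A
      rw [this]; group
  exact ⟨((MonoidHom.ofInjective hinj).trans (MulEquiv.subgroupCongr hrange)).symm⟩
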